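/- The screw functions in Example 3 are piecewise linear: Let λ₀ ∈ (−π/2, π/2] with λ₀ ≠ 0 and set β := −sin(2λ₀)/(cosh 2 − cos(2λ₀)). Then for every t ∈ [−2, 2]: iβt + ∑_{k∈ℤ} ( e^{i(λ₀+kπ)t} − 1 − i(λ₀+kπ)t/(1+(λ₀+kπ)²) ) / (λ₀+kπ)² = −|t|. -/

import Mathlib

/-!
Write `m = z + kπ`. On `[0, 2]` the numbers `1 / m²` are the Fourier coefficients of
`exp (-izt) (1 / sin² z + (i cot z - 1) t)`, whose linear factor is chosen so that the values at the
two ends agree; hence `∑ (exp (imt) - 1) / m² = i t cot z - |t|`, first for `t ∈ [0, 2]` and then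
for `t ∈ [-2, 0]` by the symmetry `(z, k, t) ↦ (-z, -k, -t)`. The compensating terms
`1 / (m (1 + m²))` split into partial fractions at `m` and `m ± i`, and the Mittag-Leffler expansion
of the cotangent sums them to `cot z - (cot (z + i) + cot (z - i)) / 2`. The terms `i t cot z`
cancel, and the remaining linear term is `-iβt`.
-/

section

open Complex Set
open scoped Real

theorem hasSum_fourierCoeffOn_smul_fourier {a b : ℝ} (hab : a < b) {f : ℝ → ℂ}
    (hf : ContinuousOn f (Icc a b)) (hfab : f a = f b) (hsum : Summable (fourierCoeffOn hab f))
    {x : ℝ} (hx : x ∈ Icc a b) :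
    HasSum (fun n : ℤ => fourierCoeffOn hab f n • fourier n (x : AddCircle (b - a))) (f x) := by
  have : Fact (0 < b - a) := ⟨sub_pos.mpr hab⟩
  have hb : a + (b - a) = b := add_sub_cancel a b
  let g : C(AddCircle (b - a), ℂ) := ⟨AddCircle.liftIoc (b - a) a f,
    AddCircle.liftIoc_continuous (hb.symm ▸ hfab) (hb.symm ▸ hf)⟩
  have hgx : g x = f x := by
    rcases hx.1.eq_or_lt with rfl | hax
    · change AddCircle.liftIoc (b - a) a f a = f a
      rw [← AddCircle.coe_add_period, AddCircle.liftIoc_coe_apply (by simp [hab]), hb, hfab]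
    · exact AddCircle.liftIoc_coe_apply ⟨hax, hb.symm ▸ hx.2⟩
  exact hgx ▸ has_pointwise_sum_fourier_series_of_summable (f := g) hsum x

theorem integral_cexp_mul_linear {c : ℂ} (hc : c ≠ 0) (a b : ℂ) (p q : ℝ) :
    ∫ x : ℝ in p..q, cexp (c * x) * (a + b * x) =
      (cexp (c * q) * (c * (a + b * q) - b) - cexp (c * p) * (c * (a + b * p) - b)) / c ^ 2 := by
  have hderiv (x : ℝ) :
      HasDerivAt (fun x : ℝ => cexp (c * x) * (c * (a + b * x) - b) / c ^ 2)
        (cexp (c * x) * (a + b * x)) x := by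
    have hx : HasDerivAt (fun x : ℝ => (x : ℂ)) 1 x := ofRealCLM.hasDerivAt
    have hexp := (hx.const_mul c).cexp
    have hlin := (((hx.const_mul b).const_add a).const_mul c).sub_const b
    refine ((hexp.mul hlin).div_const (c ^ 2)).congr_deriv ?_
    field_simp
    ring
  rw [intervalIntegral.integral_eq_sub_of_hasDerivAt (fun x _ => hderiv x)
    (Continuous.intervalIntegrable (by fun_prop) _ _), sub_div]

theorem summable_one_div_add_intCast_mul_add_intCast (x y : ℂ) :
    Summable fun n : ℤ => 1 / ((x + n) * (y + n)) := by
  simp only [one_div]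
  apply EisensteinSeries.summable_inv_of_isBigO_rpow_inv (a := 2) (by norm_num)
  simpa [pow_two] using (EisensteinSeries.linear_inv_isBigO_right 1 y).mul
    (EisensteinSeries.linear_inv_isBigO_right 1 x)

theorem hasSum_one_div_add_intCast_sub {x y : ℂ} (hx : x ∈ integerComplement)
    (hy : y ∈ integerComplement) :
    HasSum (fun n : ℤ => 1 / (x + n) - 1 / (y + n)) (π * cot (π * x) - π * cot (π * y)) := by
  have hsummable : Summable fun n : ℤ => 1 / (x + n) - 1 / (y + n) := by
    refine ((summable_one_div_add_intCast_mul_add_intCast x y).mul_left (y - x)).congr fun n => ?_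
    rw [div_sub_div _ _ (integerComplement_add_ne_zero hx n) (integerComplement_add_ne_zero hy n)]
    ring
  have hcot {w : ℂ} (hw : w ∈ integerComplement) :
      HasSum (fun n : ℕ => 1 / (w - (n + 1)) + 1 / (w + (n + 1))) (π * cot (π * w) - 1 / w) :=
    cot_series_rep' hw ▸ (summable_cotTerm hw).hasSum
  have hpaired := (hasSum_nat_add_iff' 1).mpr hsummable.hasSum.nat_add_neg
  have htsum := hpaired.unique (((hcot hx).sub (hcot hy)).congr_fun fun n => by push_cast; ring)
  convert hsummable.hasSum using 1
  simp only [Finset.sum_range_one, Int.cast_zero, Nat.cast_zero, neg_zero, add_zero,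
    add_sub_add_right_eq_sub] at htsum ⊢
  linear_combination -htsum

theorem div_pi_mem_integerComplement {z : ℂ} (hz : sin z ≠ 0) :
    z / π ∈ integerComplement := by
  rintro ⟨n, hn⟩
  exact sin_ne_zero_iff.mp hz n ((eq_div_iff (ofReal_ne_zero.mpr Real.pi_ne_zero)).mp hn).symm

theorem add_int_mul_pi_ne_zero {z : ℂ} (hz : sin z ≠ 0) (k : ℤ) : z + k * π ≠ 0 := by
  intro h
  refine sin_ne_zero_iff.mp hz (-k) ?_
  push_cast
  linear_combination h

theorem summable_one_div_add_int_mul_pi_sq (z : ℂ) :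
    Summable fun k : ℤ => 1 / (z + k * π) ^ 2 := by
  have hpi : (π : ℂ) ≠ 0 := ofReal_ne_zero.mpr Real.pi_ne_zero
  refine ((summable_one_div_add_intCast_mul_add_intCast (z / π) (z / π)).mul_left
    (1 / (π : ℂ) ^ 2)).congr fun k => ?_
  rw [one_div_mul_one_div, ← sq, ← mul_pow, mul_add, mul_div_cancel₀ _ hpi, mul_comm (π : ℂ)]

theorem hasSum_one_div_add_int_mul_pi_sub {z w : ℂ} (hz : sin z ≠ 0) (hw : sin w ≠ 0) :
    HasSum (fun k : ℤ => 1 / (z + k * π) - 1 / (w + k * π)) (cot z - cot w) := by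
  have hpi : (π : ℂ) ≠ 0 := ofReal_ne_zero.mpr Real.pi_ne_zero
  have h := (hasSum_one_div_add_intCast_sub (div_pi_mem_integerComplement hz)
    (div_pi_mem_integerComplement hw)).div_const (π : ℂ)
  simp only [mul_div_cancel₀ _ hpi, ← mul_sub, mul_div_cancel_left₀ _ hpi] at h
  refine h.congr_fun fun k => ?_
  rw [sub_div, div_div, div_div, add_mul, add_mul, div_mul_cancel₀ _ hpi, div_mul_cancel₀ _ hpi]

theorem cos_two_mul_sub_cos_two_mul (w z : ℂ) :
    cos (2 * w) - cos (2 * z) = 2 * (sin (z + w) * sin (z - w)) := by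
  rw [← neg_sub, cos_sub_cos]
  ring_nf

theorem cot_add_add_cot_sub {z w : ℂ} (hadd : sin (z + w) ≠ 0) (hsub : sin (z - w) ≠ 0) :
    cot (z + w) + cot (z - w) = 2 * sin (2 * z) / (cos (2 * w) - cos (2 * z)) := by
  have hnum : sin (2 * z) = sin (z + w) * cos (z - w) + cos (z + w) * sin (z - w) := by
    rw [← sin_add]
    ring_nf
  rw [cos_two_mul_sub_cos_two_mul, hnum, mul_div_mul_left _ _ two_ne_zero, cot, cot,
    div_add_div _ _ hadd hsub, add_comm]

theorem sin_add_mul_sin_sub_ne_zero {z w : ℂ} (h : cos (2 * z) ≠ cos (2 * w)) :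
    sin (z + w) * sin (z - w) ≠ 0 :=
  right_ne_zero_of_mul (cos_two_mul_sub_cos_two_mul w z ▸ sub_ne_zero.mpr h.symm)

theorem hasSum_one_div_mul_one_add_sq {z : ℂ} (hz : sin z ≠ 0) (hz' : cos (2 * z) ≠ cosh 2) :
    HasSum (fun k : ℤ => 1 / ((z + k * π) * (1 + (z + k * π) ^ 2)))
      (cot z - sin (2 * z) / (cosh 2 - cos (2 * z))) := by
  rw [← cos_mul_I] at hz' ⊢
  have hadd : sin (z + I) ≠ 0 := left_ne_zero_of_mul (sin_add_mul_sin_sub_ne_zero hz')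
  have hsub : sin (z - I) ≠ 0 := right_ne_zero_of_mul (sin_add_mul_sin_sub_ne_zero hz')
  have hsum := ((hasSum_one_div_add_int_mul_pi_sub hz hadd).add
    (hasSum_one_div_add_int_mul_pi_sub hz hsub)).div_const 2
  have hvalue : (cot z - cot (z + I) + (cot z - cot (z - I))) / 2 =
      cot z - sin (2 * z) / (cos (2 * I) - cos (2 * z)) := by
    linear_combination -cot_add_add_cot_sub hadd hsub / 2
  refine (hvalue ▸ hsum).congr_fun fun k => ?_
  have hk := add_int_mul_pi_ne_zero hz k
  have hkadd : z + k * π + I ≠ 0 := add_right_comm z I _ ▸ add_int_mul_pi_ne_zero hadd k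
  have hksub : z + k * π - I ≠ 0 := sub_add_eq_add_sub z I _ ▸ add_int_mul_pi_ne_zero hsub k
  rw [add_right_comm z I, sub_add_eq_add_sub z I]
  generalize z + k * π = m at *
  have hfactor : 1 + m ^ 2 = (m + I) * (m - I) := by linear_combination I_sq
  rw [hfactor]
  field_simp
  linear_combination 2 * I_sq

theorem cexp_two_mul_I_mul_ne_one {z : ℂ} (hz : sin z ≠ 0) : cexp (2 * I * z) ≠ 1 := by
  intro h
  obtain ⟨n, hn⟩ := exp_eq_one_iff.mp h
  refine sin_ne_zero_iff.mp hz n (mul_left_cancel₀ (mul_ne_zero two_ne_zero I_ne_zero) ?_)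
  linear_combination hn

theorem I_mul_cot_sub_one_mul_cexp_sub_one {z : ℂ} (hz : sin z ≠ 0) :
    (I * cot z - 1) * (cexp (-(2 * I * z)) - 1) = 2 := by
  have hE := exp_ne_zero (2 * I * z)
  have hE1 := sub_ne_zero.mpr (cexp_two_mul_I_mul_ne_one hz).symm
  rw [cot_eq_exp_ratio, exp_neg]
  generalize cexp (2 * I * z) = E at *
  field_simp
  ring

theorem cexp_mul_one_div_sin_sq_add {z : ℂ} (hz : sin z ≠ 0) :
    cexp (-(2 * I * z)) * (1 / sin z ^ 2 + (I * cot z - 1) * 2) = 1 / sin z ^ 2 := by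
  have hslope := I_mul_cot_sub_one_mul_cexp_sub_one hz
  have hne : I * cot z - 1 ≠ 0 := left_ne_zero_of_mul (hslope ▸ two_ne_zero)
  have hsq : (I * cot z - 1) ^ 2 + 2 * (I * cot z - 1) + 1 / sin z ^ 2 = 0 := by
    rw [cot]
    field_simp
    linear_combination cos z ^ 2 * I_sq - sin_sq_add_cos_sq z
  refine mul_left_cancel₀ hne ?_
  linear_combination (1 / sin z ^ 2 + (I * cot z - 1) * 2) * hslope + 2 * hsq

theorem fourierCoeffOn_cexp_mul_linear {z : ℂ} (a b : ℂ) {k : ℤ} (hk : z + k * π ≠ 0) :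
    fourierCoeffOn (zero_lt_two' ℝ) (fun x : ℝ => cexp (-(I * z * x)) * (a + b * x)) k =
      (b * (cexp (-(2 * I * z)) - 1) +
        I * (z + k * π) * (cexp (-(2 * I * z)) * (a + b * 2) - a)) / (2 * (z + k * π) ^ 2) := by
  have hintegrand (x : ℝ) :
      fourier (-k) (x : AddCircle ((2 : ℝ) - 0)) • (cexp (-(I * z * x)) * (a + b * x)) =
        cexp (-(I * (z + k * π)) * x) * (a + b * x) := by
    rw [fourier_coe_apply, smul_eq_mul, ← mul_assoc, ← exp_add]
    congr 2
    push_cast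
    ring
  have hexp : cexp (-(I * (z + k * π)) * 2) = cexp (-(2 * I * z)) :=
    exp_eq_exp_iff_exists_int.mpr ⟨-k, by push_cast; ring⟩
  simp_rw [fourierCoeffOn_eq_integral, hintegrand]
  rw [integral_cexp_mul_linear (neg_ne_zero.mpr (mul_ne_zero I_ne_zero hk))]
  simp only [ofReal_ofNat, hexp, ofReal_zero, mul_zero, exp_zero, sub_zero, real_smul]
  push_cast
  rw [neg_sq, mul_pow, I_sq]
  field_simp
  ring

theorem hasSum_cexp_div_sq_of_nonneg {z : ℂ} (hz : sin z ≠ 0) {t : ℝ} (ht : t ∈ Icc 0 2) :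
    HasSum (fun k : ℤ => cexp (I * (z + k * π) * t) / (z + k * π) ^ 2)
      (1 / sin z ^ 2 + (I * cot z - 1) * t) := by
  let f (x : ℝ) : ℂ := cexp (-(I * z * x)) * (1 / sin z ^ 2 + (I * cot z - 1) * x)
  have hcoeff : fourierCoeffOn (zero_lt_two' ℝ) f = fun k : ℤ => 1 / (z + k * π) ^ 2 := by
    funext k
    rw [fourierCoeffOn_cexp_mul_linear _ _ (add_int_mul_pi_ne_zero hz k),
      I_mul_cot_sub_one_mul_cexp_sub_one hz, cexp_mul_one_div_sin_sq_add hz, sub_self, mul_zero,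
      add_zero, ← div_div, div_self two_ne_zero]
  have hends : f 0 = f 2 := by
    simpa [f, mul_right_comm I z 2, mul_comm I 2] using (cexp_mul_one_div_sin_sq_add hz).symm
  have hseries := hasSum_fourierCoeffOn_smul_fourier (zero_lt_two' ℝ) (f := f)
    (by fun_prop) hends (hcoeff ▸ summable_one_div_add_int_mul_pi_sq z) ht
  have hvalue : cexp (I * z * t) * f t = 1 / sin z ^ 2 + (I * cot z - 1) * t := by
    rw [← mul_assoc, ← exp_add, add_neg_cancel, exp_zero, one_mul]
  refine (hvalue ▸ hseries.mul_left (cexp (I * z * t))).congr_fun fun k => ?_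
  rw [hcoeff, fourier_coe_apply, smul_eq_mul, mul_left_comm, ← exp_add, one_div_mul_eq_div]
  congr 2
  push_cast
  ring

theorem hasSum_cexp_div_sq {z : ℂ} (hz : sin z ≠ 0) {t : ℝ} (ht : t ∈ Icc (-2) 2) :
    HasSum (fun k : ℤ => cexp (I * (z + k * π) * t) / (z + k * π) ^ 2)
      (1 / sin z ^ 2 + I * cot z * t - |t|) := by
  rcases le_total 0 t with h | h
  · rw [abs_of_nonneg h]
    convert hasSum_cexp_div_sq_of_nonneg hz ⟨h, ht.2⟩ using 1
    ring
  · have hneg := (Equiv.neg ℤ).hasSum_iff.mpr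
      (hasSum_cexp_div_sq_of_nonneg (z := -z) (t := -t) (by simpa using hz)
        ⟨neg_nonneg.mpr h, neg_le.mp ht.1⟩)
    have hvalue : 1 / sin (-z) ^ 2 + (I * cot (-z) - 1) * (-t : ℝ) =
        1 / sin z ^ 2 + I * cot z * t - |t| := by
      rw [abs_of_nonpos h, cot, cot, sin_neg, cos_neg, div_neg, neg_sq]
      push_cast
      ring
    refine (hvalue ▸ hneg).congr_fun fun k => ?_
    simp only [Function.comp_apply, Equiv.neg_apply]
    push_cast
    ring_nf

theorem hasSum_cexp_sub_one_div_sq {z : ℂ} (hz : sin z ≠ 0) {t : ℝ} (ht : t ∈ Icc (-2) 2) :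
    HasSum (fun k : ℤ => (cexp (I * (z + k * π) * t) - 1) / (z + k * π) ^ 2)
      (I * cot z * t - |t|) := by
  have hzero := hasSum_cexp_div_sq hz (t := 0) (by simp)
  simp only [ofReal_zero, mul_zero, exp_zero, abs_zero, add_zero, sub_zero] at hzero
  have hvalue : 1 / sin z ^ 2 + I * cot z * t - |t| - 1 / sin z ^ 2 = I * cot z * t - |t| := by
    ring
  exact (hvalue ▸ (hasSum_cexp_div_sq hz ht).sub hzero).congr_fun fun k => sub_div _ _ _

theorem hasSum_cexp_sub_one_sub_div_sq {z : ℂ} (hz : sin z ≠ 0) (hz' : cos (2 * z) ≠ cosh 2)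
    {t : ℝ} (ht : t ∈ Icc (-2) 2) :
    HasSum (fun k : ℤ => (cexp (I * (z + k * π) * t) - 1 -
        I * (z + k * π) * t / (1 + (z + k * π) ^ 2)) / (z + k * π) ^ 2)
      (I * (sin (2 * z) / (cosh 2 - cos (2 * z))) * t - |t|) := by
  have hsum := (hasSum_cexp_sub_one_div_sq hz ht).sub
    ((hasSum_one_div_mul_one_add_sq hz hz').mul_left (I * t))
  have hvalue : I * cot z * t - |t| -
      I * t * (cot z - sin (2 * z) / (cosh 2 - cos (2 * z))) =
      I * (sin (2 * z) / (cosh 2 - cos (2 * z))) * t - |t| := by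
    ring
  refine (hvalue ▸ hsum).congr_fun fun k => ?_
  have hk := add_int_mul_pi_ne_zero hz k
  rw [sub_div]
  congr 1
  field_simp

theorem sin_ofReal_ne_zero {x : ℝ} (hlower : -π < x) (hupper : x < π) (hx : x ≠ 0) :
    sin (x : ℂ) ≠ 0 := by
  exact_mod_cast (Real.sin_eq_zero_iff_of_lt_of_lt hlower hupper).not.mpr hx

theorem cos_ofReal_ne_cosh_ofReal (x : ℝ) {y : ℝ} (hy : y ≠ 0) : cos (x : ℂ) ≠ cosh y := by
  exact_mod_cast ((Real.cos_le_one x).trans_lt (Real.one_lt_cosh.mpr hy)).ne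

theorem example3_screw_function_piecewise_linear_general {z : ℂ} (hz : sin z ≠ 0)
    (hz' : cos (2 * z) ≠ cosh 2) {β : ℂ} (hβ : β = -(sin (2 * z) / (cosh 2 - cos (2 * z))))
    {t : ℝ} (ht : t ∈ Icc (-2) 2) :
    Summable (fun k : ℤ => (cexp (I * (z + k * π) * t) - 1 -
        I * (z + k * π) * t / (1 + (z + k * π) ^ 2)) / (z + k * π) ^ 2) ∧
    I * β * t + ∑' k : ℤ, (cexp (I * (z + k * π) * t) - 1 -
        I * (z + k * π) * t / (1 + (z + k * π) ^ 2)) / (z + k * π) ^ 2 = -(|t| : ℝ) := by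
  have hsum := hasSum_cexp_sub_one_sub_div_sq hz hz' ht
  refine ⟨hsum.summable, ?_⟩
  rw [hsum.tsum_eq, hβ]
  ring

end

/-- **The screw functions in Example 3 are piecewise linear.**
For `λ₀ ∈ (-π/2, π/2]`, `λ₀ ≠ 0`, `β = -sin(2λ₀)/(cosh 2 - cos(2λ₀))` and `t ∈ [-2,2]`:
`iβt + ∑_{k∈ℤ} (e^{i(λ₀+kπ)t} - 1 - i(λ₀+kπ)t/(1+(λ₀+kπ)²))/(λ₀+kπ)² = -|t|`,
the series converging absolutely. -/
theorem example3_screw_function_piecewise_linear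
    (lam₀ : ℝ) (hlam₀ : lam₀ ∈ Set.Ioc (-(Real.pi / 2)) (Real.pi / 2)) (hne : lam₀ ≠ 0)
    (β : ℝ) (hβ : β = -(Real.sin (2 * lam₀) / (Real.cosh 2 - Real.cos (2 * lam₀))))
    (t : ℝ) (ht : t ∈ Set.Icc (-2 : ℝ) 2) :
    Summable (fun k : ℤ =>
      (Complex.exp (Complex.I * ((lam₀ : ℂ) + k * Real.pi) * t) - 1 -
          Complex.I * ((lam₀ : ℂ) + k * Real.pi) * t /
            (1 + ((lam₀ : ℂ) + k * Real.pi) ^ 2)) /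
        ((lam₀ : ℂ) + k * Real.pi) ^ 2) ∧
    Complex.I * β * t +
        ∑' k : ℤ,
          (Complex.exp (Complex.I * ((lam₀ : ℂ) + k * Real.pi) * t) - 1 -
              Complex.I * ((lam₀ : ℂ) + k * Real.pi) * t /
                (1 + ((lam₀ : ℂ) + k * Real.pi) ^ 2)) /
            ((lam₀ : ℂ) + k * Real.pi) ^ 2 =
      -(|t| : ℝ) :=
  example3_screw_function_piecewise_linear_general
    (sin_ofReal_ne_zero (by linarith [hlam₀.1, Real.pi_pos])
      (by linarith [hlam₀.2, Real.pi_pos]) hne)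
    (by simpa using cos_ofReal_ne_cosh_ofReal (2 * lam₀) two_ne_zero) (by simp [hβ]) ht
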